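/- Let Γ be a finite group acting on a finite set X, and let M be the abelian group of functions X → ℂ^× under pointwise multiplication, with Γ-action (σ·t)(x) = t(σ^{-1}·x). Then for every abelian group S equipped with a Γ-action by automorphisms and every surjective Γ-equivariant group homomorphism p : S → M, the induced map on Γ-invariants S^Γ → M^Γ is surjective. -/

import Mathlib

/-!
Averaging over `Γ` is replaced by the norm `N s = ∏ σ, σ • s`: its values are invariant and it
commutes with equivariant homomorphisms, so invariants that are norms can be lifted along any
equivariant surjection. In `M = (X → ℂˣ)` every invariant is a norm: for an invariant `t`, choosing
a `|Γ|`-th root of each *value* of `t` gives a function `r ∘ t` that is again invariant, so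
`N (r ∘ t) = (r ∘ t) ^ |Γ| = t`.
-/

open Function MulAction

section ActionNorm

variable (Γ : Type*) {S M : Type*} [Fintype Γ] [CommMonoid S] [CommMonoid M]

/-- The norm `∏ σ, σ • m` of an element of a multiplicative `Γ`-module, the multiplicative
counterpart of `Representation.norm`. It is used to produce `Γ`-invariant elements. -/
def actionNorm [Monoid Γ] [MulDistribMulAction Γ M] (m : M) : M := ∏ σ : Γ, σ • m

variable {Γ}

theorem actionNorm_mem_fixedPoints [Group Γ] [MulDistribMulAction Γ M] (m : M) :
    actionNorm Γ m ∈ fixedPoints Γ M :=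
  Finset.smul_prod_perm m

theorem actionNorm_eq_pow_card [Monoid Γ] [MulDistribMulAction Γ M] {m : M}
    (hm : m ∈ fixedPoints Γ M) : actionNorm Γ m = m ^ Fintype.card Γ :=
  (Finset.prod_congr rfl fun σ _ => hm σ).trans (Finset.prod_const m)

theorem map_actionNorm [Monoid Γ] [MulDistribMulAction Γ S] [MulDistribMulAction Γ M]
    (f : S →*[Γ] M) (s : S) : f (actionNorm Γ s) = actionNorm Γ (f s) := by
  simp only [actionNorm, map_prod, map_smul]

theorem range_actionNorm_subset_image_fixedPoints [Group Γ] [MulDistribMulAction Γ S]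
    [MulDistribMulAction Γ M] (f : S →*[Γ] M) (hf : Surjective f) :
    Set.range (actionNorm Γ : M → M) ⊆ f '' fixedPoints Γ S := by
  rintro _ ⟨m, rfl⟩
  obtain ⟨s, rfl⟩ := hf m
  exact ⟨actionNorm Γ s, actionNorm_mem_fixedPoints s, map_actionNorm f s⟩

end ActionNorm

section Arrow

attribute [local instance] arrowAction arrowMulDistribMulAction

variable {Γ X A : Type*} [Group Γ] [MulAction Γ X]

theorem comp_mem_fixedPoints_arrow {B : Type*} {t : X → A} (ht : t ∈ fixedPoints Γ (X → A))
    (r : A → B) : r ∘ t ∈ fixedPoints Γ (X → B) :=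
  fun σ => congrArg (r ∘ ·) (ht σ)

theorem fixedPoints_arrow_subset_range_actionNorm [Fintype Γ] [CommMonoid A]
    (hA : Surjective fun a : A => a ^ Fintype.card Γ) :
    fixedPoints Γ (X → A) ⊆ Set.range (actionNorm Γ) := by
  intro t ht
  obtain ⟨r, hr⟩ := hA.hasRightInverse
  refine ⟨r ∘ t, ?_⟩
  calc actionNorm Γ (r ∘ t) = (r ∘ t) ^ Fintype.card Γ :=
        actionNorm_eq_pow_card (comp_mem_fixedPoints_arrow ht r)
    _ = t := funext fun x => hr (t x)

theorem invariants_map_surjective_general {S : Type*} [Fintype Γ] [CommMonoid A] [CommMonoid S]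
    [MulDistribMulAction Γ S] (hA : Surjective fun a : A => a ^ Fintype.card Γ)
    (P : S →* (X → A)) (hP_surj : Surjective P)
    (hP_equiv : ∀ σ : Γ, ∀ s : S, ∀ x : X, P (σ • s) x = P s (σ⁻¹ • x))
    (m : X → A) (hm_inv : ∀ σ : Γ, ∀ x : X, m (σ⁻¹ • x) = m x) :
    ∃ s : S, (∀ σ : Γ, σ • s = s) ∧ P s = m := by
  let f : S →*[Γ] (X → A) := { P with map_smul' := fun σ s => funext (hP_equiv σ s) }
  have hm : m ∈ fixedPoints Γ (X → A) := fun σ => funext (hm_inv σ)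
  exact range_actionNorm_subset_image_fixedPoints f hP_surj
    (fixedPoints_arrow_subset_range_actionNorm hA hm)

end Arrow

theorem units_pow_surjective_of_isAlgClosed {k : Type*} [Field k] [IsAlgClosed k] {n : ℕ}
    (hn : n ≠ 0) : Surjective fun u : kˣ => u ^ n := by
  intro z
  obtain ⟨w, hw⟩ := IsAlgClosed.exists_pow_nat_eq (z : k) (Nat.pos_of_ne_zero hn)
  have hw_unit : IsUnit w := (isUnit_pow_iff hn).1 (hw ▸ z.isUnit)
  exact ⟨hw_unit.unit, Units.ext hw⟩

/-- For a finite group `Γ` acting on a finite set `X` and `M = (X → ℂˣ)` with action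
`(σ·t)(x) = t(σ⁻¹·x)`: any surjective `Γ`-equivariant homomorphism `P : S → M` from an
abelian group `S` with `Γ`-action induces a surjection on `Γ`-invariants `S^Γ → M^Γ`. -/
theorem invariants_map_surjective
    {Γ X S : Type*} [Group Γ] [Fintype Γ] [Fintype X] [MulAction Γ X]
    [CommGroup S] [MulDistribMulAction Γ S]
    (P : S →* (X → ℂˣ)) (hP_surj : Function.Surjective P)
    (hP_equiv : ∀ σ : Γ, ∀ s : S, ∀ x : X, P (σ • s) x = P s (σ⁻¹ • x))
    (m : X → ℂˣ) (hm_inv : ∀ σ : Γ, ∀ x : X, m (σ⁻¹ • x) = m x) :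
    ∃ s : S, (∀ σ : Γ, σ • s = s) ∧ P s = m :=
  invariants_map_surjective_general
    (units_pow_surjective_of_isAlgClosed Fintype.card_ne_zero) P hP_surj hP_equiv m hm_inv
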